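/- Let 𝒞 be a finite constraint set over base type variables {τ_i}, and let G be the labeled graph whose nodes are the derived type variables appearing in 𝒞 together with all of their prefixes, with a labeled edge n(α) →^ℓ n(α.ℓ) for each such derived type variable α.ℓ. Let ∼ be the least equivalence relation on the nodes of G such that n(α) ∼ n(β) whenever (α ⊑ β) ∈ 𝒞, and n(α') ∼ n(β') whenever there are edges n(α) →^ℓ n(α') and n(β) →^{ℓ'} n(β') with n(α) ∼ n(β) and either ℓ = ℓ' or (ℓ = .load and ℓ' = .store). Then for every word u ∈ Σ*, there exists a path through the quotient graph G/∼ with label sequence u starting at the equivalence class of n(τ_i) if and only if 𝒞 ⊢ VAR τ_i.u. -/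

import Mathlib

/-- The two-element sign monoid `{⊕, ⊖}` of variances. -/
inductive Sign : Type where
  | pos
  | neg
deriving DecidableEq, Repr

/-- Multiplication in the sign monoid (`⊕` is the identity, `⊖ · ⊖ = ⊕`). -/
def Sign.mul : Sign → Sign → Sign
  | .pos, s => s
  | .neg, .pos => .neg
  | .neg, .neg => .pos

/-- Variance of a word in `Σ*`: `⟨ε⟩ = ⊕`, `⟨xw⟩ = ⟨x⟩·⟨w⟩`. -/
def wordSign {L : Type} (sgn : L → Sign) : List L → Sign
  | [] => .pos
  | x :: w => (sgn x).mul (wordSign sgn w)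

/-- A derived type variable `α.w` with base type variable `α ∈ 𝒱` and word `w ∈ Σ*`. -/
structure DTV (V L : Type) : Type where
  base : V
  word : List L

/-- Appending a single field label to a derived type variable: `α.ℓ`. -/
def DTV.app {V L : Type} (α : DTV V L) (ℓ : L) : DTV V L :=
  ⟨α.base, α.word ++ [ℓ]⟩

/-- A constraint: either `VAR X` or `X ⊑ Y` for derived type variables. -/
inductive Constraint (V L : Type) : Type where
  | var : DTV V L → Constraint V L
  | sub : DTV V L → DTV V L → Constraint V L

/-- Entailment `𝒞 ⊢ c`: the least relation containing `𝒞` and closed under the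
deduction rules T-Left, T-Right, T-InheritL, T-InheritR, T-Prefix, S-Refl,
S-Trans, S-Field⊕, S-Field⊖ and S-Pointer. -/
inductive Entails {V L : Type} (sgn : L → Sign) (load store : L)
    (C : Set (Constraint V L)) : Constraint V L → Prop where
  | ax {c} : c ∈ C → Entails sgn load store C c
  | tLeft {α β} : Entails sgn load store C (.sub α β) →
      Entails sgn load store C (.var α)
  | tRight {α β} : Entails sgn load store C (.sub α β) →
      Entails sgn load store C (.var β)
  | tInheritL {α β : DTV V L} {ℓ} : Entails sgn load store C (.sub α β) →
      Entails sgn load store C (.var (α.app ℓ)) →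
      Entails sgn load store C (.var (β.app ℓ))
  | tInheritR {α β : DTV V L} {ℓ} : Entails sgn load store C (.sub α β) →
      Entails sgn load store C (.var (β.app ℓ)) →
      Entails sgn load store C (.var (α.app ℓ))
  | tPrefix {α : DTV V L} {ℓ} : Entails sgn load store C (.var (α.app ℓ)) →
      Entails sgn load store C (.var α)
  | sRefl {α} : Entails sgn load store C (.var α) →
      Entails sgn load store C (.sub α α)
  | sTrans {α β γ} : Entails sgn load store C (.sub α β) →
      Entails sgn load store C (.sub β γ) →
      Entails sgn load store C (.sub α γ)
  | sFieldPos {α β : DTV V L} {ℓ} : Entails sgn load store C (.sub α β) →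
      Entails sgn load store C (.var (β.app ℓ)) → sgn ℓ = .pos →
      Entails sgn load store C (.sub (α.app ℓ) (β.app ℓ))
  | sFieldNeg {α β : DTV V L} {ℓ} : Entails sgn load store C (.sub α β) →
      Entails sgn load store C (.var (β.app ℓ)) → sgn ℓ = .neg →
      Entails sgn load store C (.sub (β.app ℓ) (α.app ℓ))
  | sPointer {α : DTV V L} : Entails sgn load store C (.var (α.app load)) →
      Entails sgn load store C (.var (α.app store)) →
      Entails sgn load store C (.sub (α.app store) (α.app load))

/-- `𝒞` is closed under T-Left, T-Right and T-Prefix. -/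
def ClosedTLRP {V L : Type} (C : Set (Constraint V L)) : Prop :=
  (∀ α β : DTV V L, Constraint.sub α β ∈ C →
      Constraint.var α ∈ C ∧ Constraint.var β ∈ C) ∧
  (∀ (α : DTV V L) (ℓ : L), Constraint.var (α.app ℓ) ∈ C →
      Constraint.var α ∈ C)

/-- A derived type variable occurring (syntactically) in a constraint. -/
def InConstraint {V L : Type} (α : DTV V L) : Constraint V L → Prop
  | .var β => α = β
  | .sub β γ => α = β ∨ α = γ

/-- The nodes of the graph `G`: the derived type variables appearing in `𝒞`
together with all of their prefixes. -/
def Mentioned {V L : Type} (C : Set (Constraint V L)) : Set (DTV V L) :=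
  {α | ∃ c ∈ C, ∃ β : DTV V L, InConstraint β c ∧
      α.base = β.base ∧ α.word <+: β.word}

/-- The labeled edges of `G`: `n(α) →^ℓ n(α.ℓ)` for each derived type
variable `α.ℓ` among the nodes. -/
def GEdge {V L : Type} (C : Set (Constraint V L))
    (α : DTV V L) (ℓ : L) (β : DTV V L) : Prop :=
  β ∈ Mentioned C ∧ β = α.app ℓ

/-- The least equivalence relation `∼` on the nodes of `G` such that
`n(α) ∼ n(β)` whenever `(α ⊑ β) ∈ 𝒞`, and `n(α') ∼ n(β')` whenever there are
edges `n(α) →^ℓ n(α')` and `n(β) →^{ℓ'} n(β')` with `n(α) ∼ n(β)` and either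
`ℓ = ℓ'` or (`ℓ = .load` and `ℓ' = .store`). -/
inductive GEquiv {V L : Type} (load store : L) (C : Set (Constraint V L)) :
    DTV V L → DTV V L → Prop where
  | base {α β : DTV V L} : Constraint.sub α β ∈ C → GEquiv load store C α β
  | congr {α β α' β' : DTV V L} {ℓ ℓ' : L} :
      GEdge C α ℓ α' → GEdge C β ℓ' β' → GEquiv load store C α β →
      (ℓ = ℓ' ∨ (ℓ = load ∧ ℓ' = store)) → GEquiv load store C α' β'
  | refl {α : DTV V L} : α ∈ Mentioned C → GEquiv load store C α α
  | symm {α β : DTV V L} : GEquiv load store C α β → GEquiv load store C β α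
  | trans {α β γ : DTV V L} : GEquiv load store C α β →
      GEquiv load store C β γ → GEquiv load store C α γ

/-- A path through the quotient graph `G/∼` with a given label sequence,
starting at the equivalence class of a node: a sequence of classes such that
each consecutive pair is connected by an edge of `G`, with the given label,
from some node of the one class to some node of the next. -/
inductive QPath {V L : Type} (load store : L) (C : Set (Constraint V L)) :
    DTV V L → List L → Prop where
  | nil {α : DTV V L} : α ∈ Mentioned C → QPath load store C α []
  | cons {α β γ : DTV V L} {ℓ : L} {w : List L} :
      GEquiv load store C α β → GEdge C β ℓ γ → QPath load store C γ w →
      QPath load store C α (ℓ :: w)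

namespace DTV

/-- Appending a word of field labels to a derived type variable: `α.w`. -/
def ext {V L : Type} (α : DTV V L) (w : List L) : DTV V L :=
  ⟨α.base, α.word ++ w⟩

theorem ext_nil {V L : Type} (α : DTV V L) : α.ext [] = α := by
  simp [ext]

theorem ext_cons {V L : Type} (α : DTV V L) (ℓ : L) (w : List L) :
    α.ext (ℓ :: w) = (α.app ℓ).ext w := by
  simp [ext, app]

theorem ext_concat {V L : Type} (α : DTV V L) (w : List L) (ℓ : L) :
    α.ext (w ++ [ℓ]) = (α.ext w).app ℓ := by
  simp [ext, app]

end DTV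

section Soundness

variable {V L : Type} {sgn : L → Sign} {load store : L} {C : Set (Constraint V L)}

theorem Entails.var_of_ext {α : DTV V L} {w : List L}
    (h : Entails sgn load store C (.var (α.ext w))) :
    Entails sgn load store C (.var α) := by
  induction w using List.reverseRecOn with
  | nil => rwa [DTV.ext_nil] at h
  | append_singleton w ℓ ih =>
    rw [DTV.ext_concat] at h
    exact ih h.tPrefix

theorem Entails.var_of_mentioned {α : DTV V L} (h : α ∈ Mentioned C) :
    Entails sgn load store C (.var α) := by
  obtain ⟨c, hc, ⟨b, v⟩, hβ, hb, w, hw⟩ := h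
  have hext : (⟨b, v⟩ : DTV V L) = α.ext w := by
    simp only at hb hw
    simp [DTV.ext, hb, hw]
  apply Entails.var_of_ext (w := w)
  rw [← hext]
  cases c with
  | var γ =>
    cases hβ
    exact .ax hc
  | sub γ δ =>
    rcases hβ with h | h
    · rw [h]
      exact .tLeft (.ax hc)
    · rw [h]
      exact .tRight (.ax hc)

/-- Comparable derived type variables have the same extensions. -/
theorem Entails.var_ext_of_comparable {α β : DTV V L} {w : List L}
    (h : Entails sgn load store C (.sub α β) ∨ Entails sgn load store C (.sub β α))
    (hw : Entails sgn load store C (.var (α.ext w))) :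
    Entails sgn load store C (.var (β.ext w)) := by
  induction w generalizing α β with
  | nil =>
    rw [DTV.ext_nil]
    exact h.elim .tRight .tLeft
  | cons ℓ w ih =>
    rw [DTV.ext_cons] at hw ⊢
    have hα := hw.var_of_ext
    have hβ : Entails sgn load store C (.var (β.app ℓ)) :=
      h.elim (fun h => .tInheritL h hα) (fun h => .tInheritR h hα)
    refine ih ?_ hw
    cases hs : sgn ℓ with
    | pos => exact h.imp (fun h => .sFieldPos h hβ hs) (fun h => .sFieldPos h hα hs)
    | neg =>
      exact h.symm.imp (fun h => .sFieldNeg h hα hs) (fun h => .sFieldNeg h hβ hs)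

/-- Equivalent nodes have the same extensions. -/
theorem GEquiv.var_ext_iff {α β : DTV V L} (h : GEquiv load store C α β) (w : List L) :
    Entails sgn load store C (.var (α.ext w)) ↔
      Entails sgn load store C (.var (β.ext w)) := by
  induction h generalizing w with
  | base h =>
    exact ⟨Entails.var_ext_of_comparable (.inl (.ax h)),
      Entails.var_ext_of_comparable (.inr (.ax h))⟩
  | @congr α β α' β' ℓ ℓ' hα hβ _ hℓ ih =>
    obtain ⟨hα, rfl⟩ := hα
    obtain ⟨hβ, rfl⟩ := hβ
    have hsame := ih (ℓ :: w)
    rw [DTV.ext_cons, DTV.ext_cons] at hsame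
    rcases hℓ with rfl | ⟨rfl, rfl⟩
    · exact hsame
    · have hl := (ih [ℓ]).1 (by
        rw [DTV.ext_cons, DTV.ext_nil]
        exact Entails.var_of_mentioned hα)
      rw [DTV.ext_cons, DTV.ext_nil] at hl
      have hp := Entails.sPointer hl (Entails.var_of_mentioned hβ)
      exact hsame.trans ⟨Entails.var_ext_of_comparable (.inr hp),
        Entails.var_ext_of_comparable (.inl hp)⟩
  | refl => exact Iff.rfl
  | symm _ ih => exact (ih w).symm
  | trans _ _ ih₁ ih₂ => exact (ih₁ w).trans (ih₂ w)

theorem QPath.entails_var {α : DTV V L} {w : List L} (h : QPath load store C α w) :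
    Entails sgn load store C (.var (α.ext w)) := by
  induction h with
  | nil h =>
    rw [DTV.ext_nil]
    exact Entails.var_of_mentioned h
  | cons hαβ hβγ _ ih =>
    obtain ⟨_, rfl⟩ := hβγ
    rw [← DTV.ext_cons] at ih
    exact (hαβ.var_ext_iff _).2 ih

end Soundness

section Completeness

variable {V L : Type} {sgn : L → Sign} {load store : L} {C : Set (Constraint V L)}

theorem mentioned_of_app {α : DTV V L} {ℓ : L} (h : α.app ℓ ∈ Mentioned C) :
    α ∈ Mentioned C := by
  obtain ⟨c, hc, β, hβ, hb, hw⟩ := h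
  exact ⟨c, hc, β, hβ, hb, (List.prefix_append _ _).trans hw⟩

theorem mentioned_of_inConstraint {α : DTV V L} {c : Constraint V L} (hc : c ∈ C)
    (h : InConstraint α c) : α ∈ Mentioned C :=
  ⟨c, hc, α, h, rfl, List.prefix_rfl⟩

theorem GEquiv.mentioned {α β : DTV V L} (h : GEquiv load store C α β) :
    α ∈ Mentioned C ∧ β ∈ Mentioned C := by
  induction h with
  | base h =>
    exact ⟨mentioned_of_inConstraint h (.inl rfl), mentioned_of_inConstraint h (.inr rfl)⟩
  | congr hα hβ => exact ⟨hα.1, hβ.1⟩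
  | refl h => exact ⟨h, h⟩
  | symm _ ih => exact ih.symm
  | trans _ _ ih₁ ih₂ => exact ⟨ih₁.1, ih₂.2⟩

theorem QPath.mentioned {α : DTV V L} {w : List L} (h : QPath load store C α w) :
    α ∈ Mentioned C := by
  cases h with
  | nil hm => exact hm
  | cons he => exact he.mentioned.1

/-- A path through `G/∼` from the class of one node to the class of another. -/
def QReach (load store : L) (C : Set (Constraint V L)) :
    DTV V L → List L → DTV V L → Prop
  | α, [], δ => GEquiv load store C α δ
  | α, ℓ :: w, δ => ∃ β γ, GEquiv load store C α β ∧ GEdge C β ℓ γ ∧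
      QReach load store C γ w δ

theorem QReach.qPath {α δ : DTV V L} {w : List L} (h : QReach load store C α w δ) :
    QPath load store C α w := by
  induction w generalizing α with
  | nil => exact .nil (GEquiv.mentioned h).1
  | cons ℓ w ih =>
    obtain ⟨β, γ, hαβ, hβγ, h⟩ := h
    exact .cons hαβ hβγ (ih h)

theorem qReach_concat {α δ : DTV V L} {w : List L} {ℓ : L} :
    QReach load store C α (w ++ [ℓ]) δ ↔
      ∃ β, QReach load store C α w β ∧ β.app ℓ ∈ Mentioned C ∧
        GEquiv load store C (β.app ℓ) δ := by
  induction w generalizing α with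
  | nil =>
    constructor
    · rintro ⟨β, _, hαβ, ⟨hm, rfl⟩, h⟩
      exact ⟨β, hαβ, hm, h⟩
    · rintro ⟨β, hαβ, hm, h⟩
      exact ⟨β, _, hαβ, ⟨hm, rfl⟩, h⟩
  | cons k w ih =>
    constructor
    · rintro ⟨β, γ, hαβ, hβγ, h⟩
      obtain ⟨ε, hε, h⟩ := ih.1 h
      exact ⟨ε, ⟨β, γ, hαβ, hβγ, hε⟩, h⟩
    · rintro ⟨ε, ⟨β, γ, hαβ, hβγ, hε⟩, h⟩
      exact ⟨β, γ, hαβ, hβγ, ih.2 ⟨ε, hε, h⟩⟩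

/-- Paths through `G/∼` are determined by their source class and label sequence. -/
theorem QReach.unique {α α' δ δ' : DTV V L} {w : List L}
    (hα : GEquiv load store C α α') (h : QReach load store C α w δ)
    (h' : QReach load store C α' w δ') : GEquiv load store C δ δ' := by
  induction w generalizing α α' with
  | nil => exact .trans (.symm h) (.trans hα h')
  | cons ℓ w ih =>
    obtain ⟨β, γ, hαβ, hβγ, h⟩ := h
    obtain ⟨β', γ', hαβ', hβγ', h'⟩ := h'
    exact ih (.congr hβγ hβγ' (.trans (.symm hαβ) (.trans hα hαβ')) (.inl rfl)) h h'

/-- The node `δ` lies in the class reached from the base of `X` along the word of `X`. -/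
def Realizes (load store : L) (C : Set (Constraint V L)) (X δ : DTV V L) : Prop :=
  QReach load store C ⟨X.base, []⟩ X.word δ

theorem Realizes.unique {X δ δ' : DTV V L} (h : Realizes load store C X δ)
    (h' : Realizes load store C X δ') : GEquiv load store C δ δ' :=
  QReach.unique (.refl h.qPath.mentioned) h h'

theorem realizes_app {X δ : DTV V L} {ℓ : L} :
    Realizes load store C (X.app ℓ) δ ↔
      ∃ β, Realizes load store C X β ∧ β.app ℓ ∈ Mentioned C ∧
        GEquiv load store C (β.app ℓ) δ :=
  qReach_concat

theorem realizes_self {X : DTV V L} (h : X ∈ Mentioned C) :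
    Realizes load store C X X := by
  obtain ⟨b, w⟩ := X
  induction w using List.reverseRecOn with
  | nil => exact GEquiv.refl h
  | append_singleton w ℓ ih =>
    exact realizes_app.2 ⟨_, ih (mentioned_of_app h), h, .refl h⟩

theorem QReach.congr {α δ δ' : DTV V L} {w : List L} (h : QReach load store C α w δ)
    (hδ : GEquiv load store C δ δ') : QReach load store C α w δ' := by
  induction w generalizing α with
  | nil => exact GEquiv.trans h hδ
  | cons ℓ w ih =>
    obtain ⟨β, γ, hαβ, hβγ, h⟩ := h
    exact ⟨β, γ, hαβ, hβγ, ih h⟩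

theorem Realizes.congr {X δ δ' : DTV V L} (h : Realizes load store C X δ)
    (hδ : GEquiv load store C δ δ') : Realizes load store C X δ' :=
  QReach.congr h hδ

/-- A field realized by one of two derived type variables with a common realization
is realized, by the same node, by the other. -/
theorem Realizes.app_transfer {X Y δ ε : DTV V L} {ℓ : L}
    (hX : Realizes load store C X δ) (hY : Realizes load store C Y δ)
    (h : Realizes load store C (X.app ℓ) ε) : Realizes load store C (Y.app ℓ) ε := by
  obtain ⟨β, hβ, hm, h⟩ := realizes_app.1 h
  exact realizes_app.2 ⟨β, hY.congr (hX.unique hβ), hm, h⟩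

/-- Semantics of constraints in `G/∼`: `VAR X` holds if `X` labels a path, and `X ⊑ Y`
holds if `X` and `Y` label paths ending in the same class. -/
def Holds (load store : L) (C : Set (Constraint V L)) : Constraint V L → Prop
  | .var X => ∃ δ, Realizes load store C X δ
  | .sub X Y => ∃ δ, Realizes load store C X δ ∧ Realizes load store C Y δ

theorem Entails.holds {c : Constraint V L} (h : Entails sgn load store C c) :
    Holds load store C c := by
  induction h with
  | @ax c hc =>
    cases c with
    | var X => exact ⟨X, realizes_self (mentioned_of_inConstraint hc rfl)⟩
    | sub X Y =>
      have hXY : GEquiv load store C X Y := .base hc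
      exact ⟨Y, (realizes_self hXY.mentioned.1).congr hXY, realizes_self hXY.mentioned.2⟩
  | tLeft _ ih =>
    obtain ⟨δ, hX, _⟩ := ih
    exact ⟨δ, hX⟩
  | tRight _ ih =>
    obtain ⟨δ, _, hY⟩ := ih
    exact ⟨δ, hY⟩
  | tInheritL _ _ ih₁ ih₂ =>
    obtain ⟨δ, hX, hY⟩ := ih₁
    obtain ⟨ε, hε⟩ := ih₂
    exact ⟨ε, hX.app_transfer hY hε⟩
  | tInheritR _ _ ih₁ ih₂ =>
    obtain ⟨δ, hX, hY⟩ := ih₁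
    obtain ⟨ε, hε⟩ := ih₂
    exact ⟨ε, hY.app_transfer hX hε⟩
  | tPrefix _ ih =>
    obtain ⟨ε, hε⟩ := ih
    obtain ⟨β, hβ, _⟩ := realizes_app.1 hε
    exact ⟨β, hβ⟩
  | sRefl _ ih =>
    obtain ⟨δ, hδ⟩ := ih
    exact ⟨δ, hδ, hδ⟩
  | sTrans _ _ ih₁ ih₂ =>
    obtain ⟨δ, hX, hY⟩ := ih₁
    obtain ⟨ε, hY', hZ⟩ := ih₂
    exact ⟨ε, hX.congr (hY.unique hY'), hZ⟩
  | sFieldPos _ _ _ ih₁ ih₂ =>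
    obtain ⟨δ, hX, hY⟩ := ih₁
    obtain ⟨ε, hε⟩ := ih₂
    exact ⟨ε, hY.app_transfer hX hε, hε⟩
  | sFieldNeg _ _ _ ih₁ ih₂ =>
    obtain ⟨δ, hX, hY⟩ := ih₁
    obtain ⟨ε, hε⟩ := ih₂
    exact ⟨ε, hε, hY.app_transfer hX hε⟩
  | sPointer _ _ ih₁ ih₂ =>
    obtain ⟨δ, hδ⟩ := ih₁
    obtain ⟨ε, hε⟩ := ih₂
    obtain ⟨β, hβ, hm, h⟩ := realizes_app.1 hδ
    obtain ⟨β', hβ', hm', h'⟩ := realizes_app.1 hε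
    have hls : GEquiv load store C (β.app load) (β'.app store) :=
      .congr ⟨hm, rfl⟩ ⟨hm', rfl⟩ (hβ.unique hβ') (.inr ⟨rfl, rfl⟩)
    exact ⟨ε, hε, hδ.congr (h.symm.trans (hls.trans h'))⟩

end Completeness

/-- for a finite constraint set `𝒞` and a base type variable `τ`
of `𝒞`, there is a path through `G/∼` with label sequence `u` starting at the
equivalence class of `n(τ)` if and only if `𝒞 ⊢ VAR τ.u`. -/
theorem qpath_iff_entails_var {V L : Type} (sgn : L → Sign)
    (load store : L) (hload : sgn load = .pos) (hstore : sgn store = .neg)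
    (C : Set (Constraint V L)) (hC : C.Finite)
    (τ : V) (hτ : (⟨τ, []⟩ : DTV V L) ∈ Mentioned C) (u : List L) :
    QPath load store C ⟨τ, []⟩ u ↔
      Entails sgn load store C (.var ⟨τ, u⟩) := by
  constructor
  · intro h
    exact h.entails_var
  · intro h
    obtain ⟨_, h⟩ := h.holds
    exact h.qPath
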